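/- (Remark 4) Let γ̄_B > 0 and consider Φ(R_B, R_E) = (R_B − R_E) e^{−(2^{R_B}−1)/γ̄_B} (2^{R_E} − 1) on the region 0 < R_E < R_B. A point (R_B, R_E) in this region is a critical point of Φ (both partial derivatives vanish) if and only if it satisfies the pair of equations R_E = R_B − γ̄_B/(2^{R_B} ln 2) and R_B = R_E + (2^{R_E} − 1)/(2^{R_E} ln 2). -/

import Mathlib

open Real

/-! Each partial derivative of `Φ` is a nonvanishing factor (an exponential, times `b ^ rE - 1` in
the case of `∂Φ/∂rB`) times a factor that is affine in the gap `rB - rE`. Solving the affine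
equations for the gap gives the two fixed-point equations. -/

theorem rpow_mul_log_ne_zero {b : ℝ} (hb : 0 < b) (hb1 : b ≠ 1) (r : ℝ) :
    b ^ r * log b ≠ 0 :=
  mul_ne_zero (rpow_pos_of_pos hb r).ne' (log_ne_zero_of_pos_of_ne_one hb hb1)

/-- The limit `Φ` of the rescaled effective secrecy throughput of the fixed-rate scheme as the
eavesdropper SNR tends to infinity, as a function of the average main-channel SNR `γ`, the codeword
rate `rB` and the redundancy rate `rE`. The base `b` fixes the unit of the rates, `b = 2` being the
paper's choice of bits. -/
noncomputable def highSNRThroughput (b γ rB rE : ℝ) : ℝ :=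
  (rB - rE) * exp (-(b ^ rB - 1) / γ) * (b ^ rE - 1)

namespace highSNRThroughput

variable {b γ rB rE : ℝ}

theorem hasDerivAt_codewordRate (hb : 0 < b) :
    HasDerivAt (fun r => highSNRThroughput b γ r rE)
      (exp (-(b ^ rB - 1) / γ) * (b ^ rE - 1) * (1 - (rB - rE) * (b ^ rB * log b) / γ)) rB := by
  have hgap : HasDerivAt (fun r => r - rE) 1 rB := (hasDerivAt_id' rB).sub_const rE
  have hexp : HasDerivAt (fun r => exp (-(b ^ r - 1) / γ))
      (exp (-(b ^ rB - 1) / γ) * (-(b ^ rB * log b) / γ)) rB :=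
    ((((hasStrictDerivAt_const_rpow hb rB).hasDerivAt.sub_const 1).fun_neg).div_const γ).exp
  exact ((hgap.fun_mul hexp).mul_const (b ^ rE - 1)).congr_deriv (by ring)

theorem hasDerivAt_redundancyRate (hb : 0 < b) :
    HasDerivAt (fun r => highSNRThroughput b γ rB r)
      (exp (-(b ^ rB - 1) / γ) * ((rB - rE) * (b ^ rE * log b) - (b ^ rE - 1))) rE := by
  have hgap : HasDerivAt (fun r => rB - r) (-1) rE := (hasDerivAt_id' rE).const_sub rB
  have hpow : HasDerivAt (fun r => b ^ r - 1) (b ^ rE * log b) rE :=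
    (hasStrictDerivAt_const_rpow hb rE).hasDerivAt.sub_const 1
  exact ((hgap.mul_const (exp (-(b ^ rB - 1) / γ))).fun_mul hpow).congr_deriv (by ring)

theorem deriv_codewordRate_eq_zero_iff (hb : 0 < b) (hb1 : b ≠ 1) (hγ : γ ≠ 0) (hrE : rE ≠ 0) :
    deriv (fun r => highSNRThroughput b γ r rE) rB = 0 ↔ rE = rB - γ / (b ^ rB * log b) := by
  have hpow : b ^ rE - 1 ≠ 0 := by
    rwa [sub_ne_zero, ← rpow_zero b, Ne, rpow_right_inj hb hb1]
  calc deriv (fun r => highSNRThroughput b γ r rE) rB = 0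
      ↔ 1 - (rB - rE) * (b ^ rB * log b) / γ = 0 := by
        rw [(hasDerivAt_codewordRate hb).deriv,
          mul_eq_zero_iff_left (mul_ne_zero (exp_ne_zero _) hpow)]
    _ ↔ rB - rE = γ / (b ^ rB * log b) := by
        rw [sub_eq_zero, eq_comm, div_eq_one_iff_eq hγ,
          eq_div_iff (rpow_mul_log_ne_zero hb hb1 rB)]
    _ ↔ rE = rB - γ / (b ^ rB * log b) := by rw [sub_eq_iff_eq_add, eq_sub_iff_add_eq', eq_comm]

theorem deriv_redundancyRate_eq_zero_iff (hb : 0 < b) (hb1 : b ≠ 1) :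
    deriv (fun r => highSNRThroughput b γ rB r) rE = 0 ↔
      rB = rE + (b ^ rE - 1) / (b ^ rE * log b) := by
  calc deriv (fun r => highSNRThroughput b γ rB r) rE = 0
      ↔ (rB - rE) * (b ^ rE * log b) - (b ^ rE - 1) = 0 := by
        rw [(hasDerivAt_redundancyRate hb).deriv, mul_eq_zero_iff_left (exp_ne_zero _)]
    _ ↔ rB - rE = (b ^ rE - 1) / (b ^ rE * log b) := by
        rw [sub_eq_zero, eq_div_iff (rpow_mul_log_ne_zero hb hb1 rE)]
    _ ↔ rB = rE + (b ^ rE - 1) / (b ^ rE * log b) := sub_eq_iff_eq_add'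

end highSNRThroughput

theorem est_fixed_rate_high_snr_critical_point_general {b γ rB rE : ℝ}
    (hb : 0 < b) (hb1 : b ≠ 1) (hγ : γ ≠ 0) (hrE : rE ≠ 0) :
    (deriv (fun r => highSNRThroughput b γ r rE) rB = 0 ∧
        deriv (fun r => highSNRThroughput b γ rB r) rE = 0) ↔
      (rE = rB - γ / (b ^ rB * log b) ∧ rB = rE + (b ^ rE - 1) / (b ^ rE * log b)) :=
  and_congr (highSNRThroughput.deriv_codewordRate_eq_zero_iff hb hb1 hγ hrE)
    (highSNRThroughput.deriv_redundancyRate_eq_zero_iff hb hb1)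

/-- Remark 4 (Eqs. (36)–(37)): on the region `0 < R_E < R_B`, a point `(R_B, R_E)` is a
critical point of `Φ(R_B, R_E) = (R_B − R_E) e^{−(2^{R_B}−1)/γ̄_B} (2^{R_E} − 1)` (both
partial derivatives vanish) iff it satisfies the pair of fixed-point equations. -/
theorem est_fixed_rate_high_snr_critical_point
    (γB : ℝ) (hγB : 0 < γB) (RB RE : ℝ) (hRE : 0 < RE) (hRERB : RE < RB)
    (Φ : ℝ → ℝ → ℝ)
    (hΦ : ∀ rB rE : ℝ, Φ rB rE =
      (rB - rE) * Real.exp (-((2 : ℝ) ^ rB - 1) / γB) * ((2 : ℝ) ^ rE - 1)) :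
    (deriv (fun rB : ℝ => Φ rB RE) RB = 0 ∧ deriv (fun rE : ℝ => Φ RB rE) RE = 0)
      ↔ (RE = RB - γB / ((2 : ℝ) ^ RB * Real.log 2)
          ∧ RB = RE + ((2 : ℝ) ^ RE - 1) / ((2 : ℝ) ^ RE * Real.log 2)) := by
  obtain rfl : Φ = highSNRThroughput 2 γB := funext₂ hΦ
  exact est_fixed_rate_high_snr_critical_point_general two_pos (by norm_num) hγB.ne' hRE.ne'
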